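/- Let I ⊆ ℝ be a nonempty open interval, let f : I → ℝ be continuous, and let n ∈ ℕ∪{0}. Fix a nonnegative C^∞ function h : ℝ → ℝ with h(u) = 0 for u ∉ (−1,1) and ∫_{−1}^1 h(t) dt = 1, and for ε > 0 set h_ε(t) := (1/ε)·h(t/ε), I_ε := (I−ε) ∩ (I+ε), and f_ε(t) := ∫_{−ε}^{ε} f(t−s) h_ε(s) ds for t ∈ I_ε. If f is n-increasing on I, then for every ε > 0 the function f_ε is n-increasing on I_ε. -/

import Mathlib

open MeasureTheory Set

/-- Integral of `f` over the set `A` with respect to the (automatically bounded) signed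
Borel measure `μ`, defined via the Jordan decomposition. -/
noncomputable def sInt (μ : MeasureTheory.SignedMeasure ℝ) (A : Set ℝ) (f : ℝ → ℝ) : ℝ :=
  (∫ t in A, f t ∂μ.toJordanDecomposition.posPart) -
  (∫ t in A, f t ∂μ.toJordanDecomposition.negPart)

/-- `μ_k(τ) = ∫_{[0,1]} (t-τ)^k dμ(t)` (with the convention `0^0 = 1`). -/
noncomputable def muK (μ : MeasureTheory.SignedMeasure ℝ) (k : ℕ) (τ : ℝ) : ℝ :=
  sInt μ (Icc 0 1) (fun t => (t - τ) ^ k)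

/-- `μ_k^-(τ) = ∫_{[0,τ)} (t-τ)^k dμ(t)`. -/
noncomputable def muMinus (μ : MeasureTheory.SignedMeasure ℝ) (k : ℕ) (τ : ℝ) : ℝ :=
  sInt μ (Ico 0 τ) (fun t => (t - τ) ^ k)

/-- `μ_k^+(τ) = ∫_{(τ,1]} (t-τ)^k dμ(t)`. -/
noncomputable def muPlus (μ : MeasureTheory.SignedMeasure ℝ) (k : ℕ) (τ : ℝ) : ℝ :=
  sInt μ (Ioc τ 1) (fun t => (t - τ) ^ k)

/-- The `n`th-order divided difference of `f` at the points `x 0, …, x n`. -/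
noncomputable def divDiff (f : ℝ → ℝ) (n : ℕ) (x : Fin (n + 1) → ℝ) : ℝ :=
  ∑ j : Fin (n + 1), f (x j) / ∏ i ∈ Finset.univ.erase j, (x j - x i)

/-- `f` is `n`-increasing on `I`: all `n`th-order divided differences at pairwise
distinct points of `I` are nonnegative. -/
def nIncreasingOn (f : ℝ → ℝ) (I : Set ℝ) (n : ℕ) : Prop :=
  ∀ x : Fin (n + 1) → ℝ, Function.Injective x → (∀ j, x j ∈ I) → 0 ≤ divDiff f n x

/-- `f` is `n`-decreasing on `I` if `-f` is `n`-increasing on `I`. -/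
def nDecreasingOn (f : ℝ → ℝ) (I : Set ℝ) (n : ℕ) : Prop :=
  nIncreasingOn (fun u => -f u) I n

/-- `φ⁺_{p,n}(u) = ((u-p)_+)^n` for `n ≥ 1`, and `φ⁺_{p,0}` is the characteristic
function of `(p,∞)`. -/
noncomputable def phiPlus (p : ℝ) (n : ℕ) (u : ℝ) : ℝ :=
  if n = 0 then (if p < u then 1 else 0) else (max 0 (u - p)) ^ n

/-- `φ⁻_{p,n}(u) = ((u-p)_−)^n` for `n ≥ 1`, and `φ⁻_{p,0}` is the characteristic
function of `(−∞,p)`. -/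
noncomputable def phiMinus (p : ℝ) (n : ℕ) (u : ℝ) : ℝ :=
  if n = 0 then (if u < p then 1 else 0) else (max 0 (p - u)) ^ n

/- The set `J(p)` associated with an interval `I` and a point `p ∈ ℝ`:
`(−∞, (p − inf I)/(sup I − inf I))` if `p ≤ inf I` (interpreted as `(−∞,0)` when `I` is
unbounded above), `ℝ` if `p ∈ I`, and `(1 + (p − sup I)/(sup I − inf I), ∞)` if
`p ≥ sup I` (interpreted as `(1,∞)` when `I` is unbounded below). -/
open scoped Classical in
noncomputable def Jset (I : Set ℝ) (p : ℝ) : Set ℝ :=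
  if p ∈ I then Set.univ
  else if p ∈ lowerBounds I then
    (if BddAbove I then Set.Iio ((p - sInf I) / (sSup I - sInf I)) else Set.Iio 0)
  else
    (if BddBelow I then Set.Ioi (1 + (p - sSup I) / (sSup I - sInf I)) else Set.Ioi 1)

/-!
The mollification of `f` is an average, with nonnegative weights, of the translates `f (· - s)`.
A divided difference is a linear functional depending only on the differences of the nodes, so
translates, nonnegative multiples and averages of `n`-increasing functions are again
`n`-increasing.
-/

theorem divDiff_comp_sub_right (f : ℝ → ℝ) (n : ℕ) (x : Fin (n + 1) → ℝ) (s : ℝ) :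
    divDiff (fun t ↦ f (t - s)) n x = divDiff f n (fun j ↦ x j - s) := by
  simp only [divDiff, sub_sub_sub_cancel_right]

theorem divDiff_mul_const (f : ℝ → ℝ) (n : ℕ) (x : Fin (n + 1) → ℝ) (c : ℝ) :
    divDiff (fun t ↦ f t * c) n x = divDiff f n x * c := by
  simp only [divDiff, Finset.sum_mul, div_mul_eq_mul_div]

theorem divDiff_integral {α : Type*} [MeasurableSpace α] {μ : Measure α} {F : α → ℝ → ℝ} {n : ℕ}
    {x : Fin (n + 1) → ℝ} (hF : ∀ j, Integrable (fun a ↦ F a (x j)) μ) :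
    divDiff (fun t ↦ ∫ a, F a t ∂μ) n x = ∫ a, divDiff (F a) n x ∂μ := by
  simp only [divDiff, ← integral_div]
  exact (integral_finsetSum _ fun j _ ↦ (hF j).div_const _).symm

namespace nIncreasingOn

variable {f : ℝ → ℝ} {S T : Set ℝ} {n : ℕ}

theorem mono (hf : nIncreasingOn f T n) (hST : S ⊆ T) : nIncreasingOn f S n :=
  fun x hx hxS ↦ hf x hx fun j ↦ hST (hxS j)

theorem comp_sub_right (hf : nIncreasingOn f S n) (s : ℝ) :
    nIncreasingOn (fun t ↦ f (t - s)) ((· - s) ⁻¹' S) n := fun x hx hxS ↦ by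
  rw [divDiff_comp_sub_right]
  exact hf _ (sub_left_injective.comp hx) hxS

theorem mul_const (hf : nIncreasingOn f S n) {c : ℝ} (hc : 0 ≤ c) :
    nIncreasingOn (fun t ↦ f t * c) S n := fun x hx hxS ↦ by
  rw [divDiff_mul_const]
  exact mul_nonneg (hf x hx hxS) hc

theorem integral {α : Type*} [MeasurableSpace α] {μ : Measure α} {F : α → ℝ → ℝ}
    (hF : ∀ᵐ a ∂μ, nIncreasingOn (F a) S n) (hint : ∀ t ∈ S, Integrable (fun a ↦ F a t) μ) :
    nIncreasingOn (fun t ↦ ∫ a, F a t ∂μ) S n := fun x hx hxS ↦ by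
  rw [divDiff_integral fun j ↦ hint _ (hxS j)]
  exact integral_nonneg_of_ae (hF.mono fun a ha ↦ ha x hx hxS)

end nIncreasingOn

section Convolution

variable {I : Set ℝ} {f k : ℝ → ℝ} {μ : Measure ℝ} {a b t : ℝ}

theorem sub_mem_of_mem_uIcc (hI : I.OrdConnected) (hta : t - a ∈ I) (htb : t - b ∈ I) {s : ℝ}
    (hs : s ∈ uIcc a b) : t - s ∈ I := by
  apply hI.uIcc_subset hta htb
  rw [← image_const_sub_uIcc]
  exact mem_image_of_mem _ hs

theorem intervalIntegrable_comp_sub_mul (hI : I.OrdConnected) (hf : ContinuousOn f I)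
    (hk : IntervalIntegrable k μ a b) (hta : t - a ∈ I) (htb : t - b ∈ I) :
    IntervalIntegrable (fun s ↦ f (t - s) * k s) μ a b :=
  hk.continuousOn_mul <| hf.comp (by fun_prop) fun _ hs ↦ sub_mem_of_mem_uIcc hI hta htb hs

theorem stmt2_general (hI : I.OrdConnected) (hf : ContinuousOn f I) {n : ℕ}
    (hinc : nIncreasingOn f I n) (hab : a ≤ b) (hk : IntervalIntegrable k μ a b)
    (hk_nonneg : ∀ s ∈ Ioc a b, 0 ≤ k s) :
    nIncreasingOn (fun t ↦ ∫ s in a..b, f (t - s) * k s ∂μ) {t | t - a ∈ I ∧ t - b ∈ I} n := by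
  simp only [intervalIntegral.integral_of_le hab]
  refine nIncreasingOn.integral (ae_restrict_of_forall_mem measurableSet_Ioc fun s hs ↦ ?_)
    fun t ht ↦ (intervalIntegrable_comp_sub_mul hI hf hk ht.1 ht.2).1
  have hs' : s ∈ uIcc a b := Ioc_subset_Icc_self.trans Icc_subset_uIcc hs
  exact ((hinc.comp_sub_right s).mul_const (hk_nonneg s hs)).mono
    fun t ht ↦ sub_mem_of_mem_uIcc hI ht.1 ht.2 hs'

end Convolution

theorem stmt2 (I : Set ℝ) (hIo : IsOpen I) (hIc : I.OrdConnected) (hIne : I.Nonempty)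
    (f : ℝ → ℝ) (hf : ContinuousOn f I) (n : ℕ)
    (h : ℝ → ℝ) (hpos : ∀ u, 0 ≤ h u) (hsmooth : ContDiff ℝ (⊤ : ℕ∞) h)
    (hsupp : ∀ u, u ∉ Ioo (-1 : ℝ) 1 → h u = 0)
    (hint : (∫ t in (-1 : ℝ)..1, h t) = 1)
    (ε : ℝ) (hε : 0 < ε)
    (hinc : nIncreasingOn f I n) :
    nIncreasingOn (fun t => ∫ s in (-ε)..ε, f (t - s) * ((1 / ε) * h (s / ε)))
      {t : ℝ | t + ε ∈ I ∧ t - ε ∈ I} n := by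
  have hcont : Continuous h := hsmooth.continuous
  have hk : Continuous fun s ↦ 1 / ε * h (s / ε) := by fun_prop
  simpa only [sub_neg_eq_add] using stmt2_general hIc hf hinc (neg_le_self hε.le)
    (hk.intervalIntegrable _ _) fun s _ ↦ mul_nonneg (by positivity) (hpos _)
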